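/- arXiv:2504.01898 — 3 statements merged into one kernel-verified Lean document; each statement's English description precedes it below -/
import Mathlib

section
/- Equivalence of momentum and iterate averaging: let (g_t)_{t≥0} be any sequence of vectors in ℝ^d, let (γ_t, β_t) and (η_t, λ_t) be positive parameter sequences satisfying β_t = (λ_t/(1 + λ_t))·(η_{t−1}/η_t) and γ_t = η_t/(1 + λ_{t+1}) for all t ≥ 0. Then the iterates (x_t) generated by the momentum recursion m_t = β_t m_{t−1} + g_t, x_{t+1} = x_t − γ_t m_t with m_{−1} = 0 coincide, for every t, with the iterates generated by the iterate-averaging recursion z_t = z_{t−1} − η_t g_t, x_{t+1} = (λ_{t+1}/(1 + λ_{t+1}))x_t + (1/(1 + λ_{t+1}))z_t with z_{−1} = x_0 (started from the same x_0); moreover z_t = x_t − (1 + λ_{t+1})γ_t m_t for all t ≥ 0. -/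
/-!
Since `γ_t = η_t / (1 + λ_{t+1})` and `η_{t+1} β_{t+1} = λ_{t+1} η_t / (1 + λ_{t+1})`, the
parameters satisfy `η_t = γ_t + η_{t+1} β_{t+1}`. This is what makes `x_t - η_t m_t` obey the
recursion of `z_t`, so that `z_t = x_t - η_t m_t`. Averaging `x_t` with `z_t`, with weight
`1 / (1 + λ_{t+1})` on `z_t`, then moves `x_t` by `-γ_t m_t`, which is the momentum step.
-/

section Ring

variable {R E : Type*} [Ring R] [AddCommGroup E] [Module R E]

theorem gradient_iterates_eq_sub_smul_momentum {g m x z : ℕ → E} {γ β η : ℕ → R}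
    (hη : ∀ t, η t = γ t + η (t + 1) * β (t + 1))
    (hm : ∀ t, m (t + 1) = β (t + 1) • m t + g (t + 1))
    (hx : ∀ t, x (t + 1) = x t - γ t • m t)
    (hz₀ : z 0 = x 0 - η 0 • m 0)
    (hz : ∀ t, z (t + 1) = z t - η (t + 1) • g (t + 1)) (t : ℕ) :
    z t = x t - η t • m t := by
  induction t with
  | zero => exact hz₀
  | succ t ih =>
    calc z (t + 1) = x t - η t • m t - η (t + 1) • g (t + 1) := by rw [hz, ih]
      _ = x t - γ t • m t - η (t + 1) • (β (t + 1) • m t + g (t + 1)) := by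
        rw [hη t, add_smul, mul_smul, smul_add]
        abel
      _ = x (t + 1) - η (t + 1) • m (t + 1) := by rw [hx, hm]

theorem smul_add_smul_sub_smul {a b : R} (hab : a + b = 1) (c : R) (u v : E) :
    a • u + b • (u - c • v) = u - (b * c) • v := by
  rw [smul_sub, ← add_sub_assoc, ← add_smul, hab, one_smul, mul_smul]

theorem averaging_iterates_eq_momentum_iterates {m x y z : ℕ → E} {a b η : ℕ → R}
    (hab : ∀ t, a t + b t = 1)
    (hx : ∀ t, x (t + 1) = x t - (b t * η t) • m t)
    (hz : ∀ t, z t = x t - η t • m t)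
    (hy₀ : y 0 = x 0) (hy : ∀ t, y (t + 1) = a t • y t + b t • z t) (t : ℕ) :
    y t = x t := by
  induction t with
  | zero => exact hy₀
  | succ t ih => rw [hy, ih, hz, smul_add_smul_sub_smul (hab t), hx]

end Ring

section Field

variable {K E : Type*} [Field K] [AddCommGroup E] [Module K E]

theorem div_one_add_add_mul_momentum_coeff {l e' : K} (hl : 1 + l ≠ 0) (he' : e' ≠ 0) (e : K) :
    e / (1 + l) + e' * (l / (1 + l) * (e / e')) = e := by
  field_simp

theorem momentum_eq_iterate_averaging_general
    {g m x z y : ℕ → E} {γ β η lam : ℕ → K}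
    (hη : ∀ t, η (t + 1) ≠ 0) (hlam : ∀ t, 1 + lam (t + 1) ≠ 0)
    (hβ : ∀ t, β (t + 1) = (lam (t + 1) / (1 + lam (t + 1))) * (η t / η (t + 1)))
    (hγ : ∀ t, γ t = η t / (1 + lam (t + 1)))
    (hm₀ : m 0 = g 0)
    (hm : ∀ t, m (t + 1) = β (t + 1) • m t + g (t + 1))
    (hx : ∀ t, x (t + 1) = x t - γ t • m t)
    (hz₀ : z 0 = x 0 - η 0 • g 0)
    (hz : ∀ t, z (t + 1) = z t - η (t + 1) • g (t + 1))
    (hy₀ : y 0 = x 0)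
    (hy : ∀ t, y (t + 1) =
      (lam (t + 1) / (1 + lam (t + 1))) • y t + (1 / (1 + lam (t + 1))) • z t) :
    (∀ t, y t = x t) ∧ (∀ t, z t = x t - ((1 + lam (t + 1)) * γ t) • m t) := by
  have hη_split (t : ℕ) : η t = γ t + η (t + 1) * β (t + 1) := by
    rw [hγ, hβ, div_one_add_add_mul_momentum_coeff (hlam t) (hη t)]
  have hzx : ∀ t, z t = x t - η t • m t :=
    gradient_iterates_eq_sub_smul_momentum hη_split hm hx (hm₀ ▸ hz₀) hz
  have hweights (t : ℕ) : lam (t + 1) / (1 + lam (t + 1)) + 1 / (1 + lam (t + 1)) = 1 := by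
    rw [← add_div, add_comm, div_self (hlam t)]
  have hx_step (t : ℕ) : x (t + 1) = x t - (1 / (1 + lam (t + 1)) * η t) • m t := by
    rw [hx, hγ, one_div_mul_eq_div]
  refine ⟨averaging_iterates_eq_momentum_iterates hweights hx_step hzx hy₀ hy, fun t ↦ ?_⟩
  rw [hzx, hγ, mul_div_cancel₀ _ (hlam t)]

end Field

/-- **Momentum = iterate averaging.** Given any sequence of vectors `g_t`, positive
parameters `(γ_t, β_t)` and `(η_t, λ_t)` linked by `β_t = (λ_t/(1+λ_t)) (η_{t−1}/η_t)`
and `γ_t = η_t/(1+λ_{t+1})`, the momentum iterates `m_t = β_t m_{t−1} + g_t`,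
`x_{t+1} = x_t − γ_t m_t` (with `m_{−1} = 0`) coincide with the iterate-averaging
iterates `z_t = z_{t−1} − η_t g_t`, `x_{t+1} = (λ_{t+1} x_t + z_t)/(1+λ_{t+1})`
(with `z_{−1} = x_0`), and moreover `z_t = x_t − (1+λ_{t+1}) γ_t m_t` for all `t`. -/
theorem momentum_eq_iterate_averaging
    {d : ℕ} (g : ℕ → EuclideanSpace ℝ (Fin d))
    (γ β η lam : ℕ → ℝ)
    (hη : ∀ t, 0 < η t) (hlam : ∀ t, 0 ≤ lam t)
    (hβ : ∀ t, β (t + 1) = (lam (t + 1) / (1 + lam (t + 1))) * (η t / η (t + 1)))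
    (hγ : ∀ t, γ t = η t / (1 + lam (t + 1)))
    (x0 : EuclideanSpace ℝ (Fin d))
    -- momentum iterates, with m₋₁ = 0 (so m₀ = g₀)
    (m x : ℕ → EuclideanSpace ℝ (Fin d))
    (hm0 : m 0 = g 0)
    (hm : ∀ t, m (t + 1) = β (t + 1) • m t + g (t + 1))
    (hx0 : x 0 = x0)
    (hx : ∀ t, x (t + 1) = x t - γ t • m t)
    -- iterate-averaging iterates, with z₋₁ = x₀ (so z₀ = x₀ − η₀ g₀)
    (z y : ℕ → EuclideanSpace ℝ (Fin d))
    (hz0 : z 0 = x0 - η 0 • g 0)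
    (hz : ∀ t, z (t + 1) = z t - η (t + 1) • g (t + 1))
    (hy0 : y 0 = x0)
    (hy : ∀ t, y (t + 1) =
      (lam (t + 1) / (1 + lam (t + 1))) • y t + (1 / (1 + lam (t + 1))) • z t) :
    (∀ t, y t = x t) ∧ (∀ t, z t = x t - ((1 + lam (t + 1)) * γ t) • m t) := by
  subst hx0
  exact momentum_eq_iterate_averaging_general (fun t ↦ (hη (t + 1)).ne')
    (fun t ↦ (add_pos_of_pos_of_nonneg one_pos (hlam (t + 1))).ne')
    hβ hγ hm0 hm hx hz0 hz hy0 hy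
end

section
/- Monotonicity of IAM iterates: if every f_ξ is convex, then for any realization of the samples the IAM iterates satisfy ‖z_t − x_*‖² ≤ ‖z_{t−1}−x_*‖² for all t ≥ 0 (hence ‖z_t − x_*‖ ≤ ‖x_0 − x_*‖), and also ‖x_t − x_*‖ ≤ ‖x_0 − x_*‖ for all t ≥ 0. -/
open MeasureTheory
open scoped RealInnerProductSpace

/-!
Since `g_t` is a subgradient, the half-space
`H_t = {w | f_{ξ_t}(x_t) + ⟪g_t, w - x_t⟫ ≤ f_{ξ_t}(x_*)}` contains `x_*`, and the step size `η_t`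
is exactly the one for which `z_t` is the metric projection of `z_{t-1}` onto `H_t`. A projection
onto a convex set brings a point no farther from any point of the set. Finally `x_{t+1}` lies on the
segment between `x_t` and `z_t`, so it never leaves the ball of radius `‖x_0 - x_*‖` around `x_*`.
-/

section HalfSpace

variable {E : Type*} [NormedAddCommGroup E] [InnerProductSpace ℝ E] {g y z : E} {b : ℝ}

/-- The metric projection of `z` onto the half-space `{w | ⟪g, w⟫ ≤ b}`, which an IAM step turns
out to be. For `g = 0` the division by zero makes it the identity, whether or not that set is
empty. -/
noncomputable def halfSpaceProj (g : E) (b : ℝ) (z : E) : E :=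
  z - (max (⟪g, z⟫ - b) 0 / ‖g‖ ^ 2) • g

theorem halfSpaceProj_of_inner_le (hz : ⟪g, z⟫ ≤ b) : halfSpaceProj g b z = z := by
  simp [halfSpaceProj, max_eq_right (sub_nonpos.mpr hz)]

theorem inner_halfSpaceProj_of_le (hg : g ≠ 0) (hz : b ≤ ⟪g, z⟫) :
    ⟪g, halfSpaceProj g b z⟫ = b := by
  have hg' : ‖g‖ ^ 2 ≠ 0 := pow_ne_zero 2 (norm_ne_zero_iff.mpr hg)
  rw [halfSpaceProj, max_eq_left (sub_nonneg.mpr hz), inner_sub_right, real_inner_smul_right,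
    real_inner_self_eq_norm_sq, div_mul_cancel₀ _ hg', sub_sub_cancel]

theorem inner_sub_halfSpaceProj_nonpos (hy : ⟪g, y⟫ ≤ b) :
    ⟪z - halfSpaceProj g b z, y - halfSpaceProj g b z⟫ ≤ 0 := by
  rcases eq_or_ne g 0 with rfl | hg
  · simp [halfSpaceProj]
  rcases le_total ⟪g, z⟫ b with hz | hz
  · simp [halfSpaceProj_of_inner_le hz]
  · have h_normal : z - halfSpaceProj g b z = (max (⟪g, z⟫ - b) 0 / ‖g‖ ^ 2) • g :=
      sub_sub_cancel _ _
    rw [h_normal, real_inner_smul_left, inner_sub_right, inner_halfSpaceProj_of_le hg hz]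
    exact mul_nonpos_of_nonneg_of_nonpos (by positivity) (sub_nonpos.mpr hy)

theorem norm_sub_le_of_inner_sub_nonpos {p : E} (h : ⟪z - p, y - p⟫ ≤ 0) :
    ‖p - y‖ ≤ ‖z - y‖ := by
  refine (sq_le_sq₀ (norm_nonneg _) (norm_nonneg _)).mp ?_
  calc ‖p - y‖ ^ 2 ≤ ‖z - p‖ ^ 2 - 2 * ⟪z - p, y - p⟫ + ‖y - p‖ ^ 2 := by
        rw [norm_sub_rev p y]
        linarith [sq_nonneg ‖z - p‖]
    _ = ‖z - y‖ ^ 2 := by rw [← norm_sub_sq_real, sub_sub_sub_cancel_right]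

theorem norm_halfSpaceProj_sub_le (hy : ⟪g, y⟫ ≤ b) : ‖halfSpaceProj g b z - y‖ ≤ ‖z - y‖ :=
  norm_sub_le_of_inner_sub_nonpos (inner_sub_halfSpaceProj_nonpos hy)

theorem norm_sub_smul_subgradient_sub_le {φ : E → ℝ} {x : E} (hg : φ x + ⟪g, y - x⟫ ≤ φ y) :
    ‖z - (max (φ x - φ y + ⟪g, z - x⟫) 0 / ‖g‖ ^ 2) • g - y‖ ≤ ‖z - y‖ := by
  have hy : ⟪g, y⟫ ≤ φ y - φ x + ⟪g, x⟫ := by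
    rw [inner_sub_right] at hg
    linarith
  have h_excess : φ x - φ y + ⟪g, z - x⟫ = ⟪g, z⟫ - (φ y - φ x + ⟪g, x⟫) := by
    rw [inner_sub_right]
    ring
  rw [h_excess]
  exact norm_halfSpaceProj_sub_le hy

end HalfSpace

section Average

variable {E : Type*} [AddCommGroup E] [Module ℝ E]

theorem weighted_average_mem_segment {l : ℝ} (hl : 0 ≤ l) (a b : E) :
    (l / (1 + l)) • a + (1 / (1 + l)) • b ∈ segment ℝ a b :=
  ⟨l / (1 + l), 1 / (1 + l), by positivity, by positivity, by field_simp; ring, rfl⟩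

theorem mem_of_forall_succ_mem_segment {C : Set E} (hC : Convex ℝ C) {x z : ℕ → E}
    (hx0 : x 0 ∈ C) (hz : ∀ t, z t ∈ C) (hx : ∀ t, x (t + 1) ∈ segment ℝ (x t) (z t)) (t : ℕ) :
    x t ∈ C := by
  induction t with
  | zero => exact hx0
  | succ t ih => exact hC.segment_subset ih (hz t) (hx t)

end Average

theorem iam_iterates_monotone_general
    {E : Type*} [NormedAddCommGroup E] [InnerProductSpace ℝ E]
    (φ : ℕ → E → ℝ) (g x Z : ℕ → E) (y x0 : E) (lam η : ℕ → ℝ)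
    (hsubgrad : ∀ t w, φ t (x t) + ⟪g t, w - x t⟫ ≤ φ t w)
    (hlam : ∀ t, 0 ≤ lam (t + 1))
    (hx0 : x 0 = x0) (hZ0 : Z 0 = x0)
    (hη : ∀ t, η t = max (φ t (x t) - φ t y + ⟪g t, Z t - x t⟫) 0 / ‖g t‖ ^ 2)
    (hZ : ∀ t, Z (t + 1) = Z t - η t • g t)
    (hx : ∀ t, x (t + 1) =
      (lam (t + 1) / (1 + lam (t + 1))) • x t + (1 / (1 + lam (t + 1))) • Z (t + 1)) :
    (∀ t, ‖Z (t + 1) - y‖ ^ 2 ≤ ‖Z t - y‖ ^ 2) ∧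
      (∀ t, ‖Z t - y‖ ≤ ‖x0 - y‖) ∧
      (∀ t, ‖x t - y‖ ≤ ‖x0 - y‖) := by
  have h_step (t : ℕ) : ‖Z (t + 1) - y‖ ≤ ‖Z t - y‖ := by
    rw [hZ, hη]
    exact norm_sub_smul_subgradient_sub_le (hsubgrad t y)
  have hZ_bound (t : ℕ) : ‖Z t - y‖ ≤ ‖x0 - y‖ :=
    hZ0 ▸ antitone_nat_of_succ_le (f := fun t => ‖Z t - y‖) h_step t.zero_le
  refine ⟨fun t => by gcongr; exact h_step t, hZ_bound, fun t => ?_⟩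
  refine mem_closedBall_iff_norm.mp <|
    mem_of_forall_succ_mem_segment (convex_closedBall y ‖x0 - y‖) ?_
      (fun t => mem_closedBall_iff_norm.mpr (hZ_bound (t + 1))) (fun t => ?_) t
  · rw [hx0, mem_closedBall_iff_norm]
  · rw [hx]
    exact weighted_average_mem_segment (hlam t) _ _

/-- **Monotonicity of the IAM iterates.** If every loss `f_ξ` is convex, then for any
realization `(s_t)` of the samples, the IAM iterates satisfy
`‖z_t − x_*‖² ≤ ‖z_{t−1} − x_*‖²` for all `t ≥ 0` (hence `‖z_t − x_*‖ ≤ ‖x_0 − x_*‖`),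
and also `‖x_t − x_*‖ ≤ ‖x_0 − x_*‖` for all `t ≥ 0`.
Here `Z t` denotes `z_{t−1}` (so `Z 0 = z_{−1} = x_0` and `Z (t+1) = z_t`). -/
theorem iam_iterates_monotone
    {d : ℕ} {S : Type*} [MeasurableSpace S] (P : Measure S) [IsProbabilityMeasure P]
    (fxi : S → EuclideanSpace ℝ (Fin d) → ℝ)
    (gxi : S → EuclideanSpace ℝ (Fin d) → EuclideanSpace ℝ (Fin d))
    (hconv : ∀ s, ConvexOn ℝ Set.univ (fxi s))
    (hsubgrad : ∀ s x y, fxi s x + ⟪gxi s x, y - x⟫ ≤ fxi s y)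
    (hfint : ∀ x, Integrable (fun s => fxi s x) P)
    (f : EuclideanSpace ℝ (Fin d) → ℝ) (hf : ∀ x, f x = ∫ s, fxi s x ∂P)
    (xstar : EuclideanSpace ℝ (Fin d)) (hmin : IsMinOn f Set.univ xstar)
    (lam : ℕ → ℝ) (hlam : ∀ t, 0 ≤ lam t)
    -- a realization of the samples
    (samp : ℕ → S)
    (x0 : EuclideanSpace ℝ (Fin d))
    (x Z : ℕ → EuclideanSpace ℝ (Fin d))
    (η : ℕ → ℝ)
    (hx0 : x 0 = x0) (hZ0 : Z 0 = x0)
    (hη : ∀ t, η t =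
      max (fxi (samp t) (x t) - fxi (samp t) xstar
            + ⟪gxi (samp t) (x t), Z t - x t⟫) 0 / ‖gxi (samp t) (x t)‖ ^ 2)
    (hZ : ∀ t, Z (t + 1) = Z t - η t • gxi (samp t) (x t))
    (hx : ∀ t, x (t + 1) =
      (lam (t + 1) / (1 + lam (t + 1))) • x t + (1 / (1 + lam (t + 1))) • Z (t + 1)) :
    (∀ t, ‖Z (t + 1) - xstar‖ ^ 2 ≤ ‖Z t - xstar‖ ^ 2) ∧
      (∀ t, ‖Z t - xstar‖ ≤ ‖x0 - xstar‖) ∧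
      (∀ t, ‖x t - xstar‖ ≤ ‖x0 - xstar‖) := by
  exact iam_iterates_monotone_general (fun t => fxi (samp t)) (fun t => gxi (samp t) (x t)) x Z
    xstar x0 lam η (fun t => hsubgrad (samp t) (x t)) (fun t => hlam (t + 1)) hx0 hZ0 hη hZ hx
end

section
/- Telescoping of the IAM numerator: consider the IAM iterates with λ_t = t (so λ_0 = 0, and z_{t−1} − x_t = −λ_t(x_{t−1} − x_t) for t ≥ 1, with the convention x_{−1} = x_0). Then for every k ≥ 0: ∑_{t=0}^{k} [f(x_t) − f(x_*) + ⟨g(x_t), z_{t−1} − x_t⟩] = (k+1)(f(x_k) − f(x_*)) + ∑_{t=1}^{k} λ_t·B_f(x_{t−1}, x_t), where g(x) is a subgradient of f at x and B_f(x,y) := f(x) − f(y) − ⟨g(y), x − y⟩; in particular B_f(x_{t−1}, x_t) ≥ 0 by convexity of f. -/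
open Finset
open scoped RealInnerProductSpace

/-! Write `c = f(x_*)`. For `t ≥ 1`, substituting `z_{t-1} - x_t = -λ_t (x_{t-1} - x_t)` turns the
`t`-th summand into `(λ_t + 1) (f(x_t) - c) - λ_t (f(x_{t-1}) - c) + λ_t B_f(x_{t-1}, x_t)`.
Up to the defect `(λ_{t-1} + 1 - λ_t) (f(x_{t-1}) - c)`, the first two terms form the difference
of the consecutive values `(λ_t + 1) (f(x_t) - c)` and `(λ_{t-1} + 1) (f(x_{t-1}) - c)`, so their
sum telescopes; with `λ_0 = 0`, the choice `λ_t = t` is the one that makes every defect vanish. -/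

section Bregman

variable {E : Type*} [SeminormedAddCommGroup E] [InnerProductSpace ℝ E]

/-- The Bregman divergence `B_f(x, y)` of `f`, linearized at `y` along `g y`. The slope field `g`
is an explicit argument because `f` need not be differentiable; it is meant to be a selection of
subgradients of `f`. -/
def bregmanDiv (f : E → ℝ) (g : E → E) (x y : E) : ℝ :=
  f x - f y - ⟪g y, x - y⟫

theorem bregmanDiv_nonneg_iff {f : E → ℝ} {g : E → E} {x y : E} :
    0 ≤ bregmanDiv f g x y ↔ f y + ⟪g y, x - y⟫ ≤ f x := by
  rw [bregmanDiv, sub_sub, sub_nonneg]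

theorem sub_add_inner_eq_add_mul_bregmanDiv (f : E → ℝ) (g : E → E) (c : ℝ) {a : ℝ} {x y z : E}
    (hz : z - y = -(a • (x - y))) :
    f y - c + ⟪g y, z - y⟫
      = (a + 1) * (f y - c) - a * (f x - c) + a * bregmanDiv f g x y := by
  rw [hz, inner_neg_right, real_inner_smul_right, bregmanDiv]
  ring

theorem iam_numerator_telescoping_general (f : E → ℝ) (g : E → E)
    (hsubgrad : ∀ x y, f x + ⟪g x, y - x⟫ ≤ f y) (c : ℝ)
    (lam : ℕ → ℝ) (hlam0 : lam 0 = 0) (x Z : ℕ → E) (hZ0 : Z 0 = x 0)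
    (hZ : ∀ t, Z (t + 1) - x (t + 1) = -(lam (t + 1) • (x t - x (t + 1)))) :
    (∀ k : ℕ,
      ∑ t ∈ range (k + 1), (f (x t) - c + ⟪g (x t), Z t - x t⟫)
        = (lam k + 1) * (f (x k) - c)
          + ∑ t ∈ range k, (lam t + 1 - lam (t + 1)) * (f (x t) - c)
          + ∑ t ∈ range k, lam (t + 1) * bregmanDiv f g (x t) (x (t + 1))) ∧
      (∀ t : ℕ, 0 ≤ bregmanDiv f g (x t) (x (t + 1))) := by
  refine ⟨fun k ↦ ?_, fun t ↦ bregmanDiv_nonneg_iff.2 (hsubgrad _ _)⟩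
  let v (t : ℕ) : ℝ := (lam t + 1) * (f (x t) - c)
  have initial_term : f (x 0) - c + ⟪g (x 0), Z 0 - x 0⟫ = v 0 := by
    simp [v, hZ0, hlam0]
  have succ_term (t : ℕ) :
      f (x (t + 1)) - c + ⟪g (x (t + 1)), Z (t + 1) - x (t + 1)⟫
        = (v (t + 1) - v t) + (lam t + 1 - lam (t + 1)) * (f (x t) - c)
          + lam (t + 1) * bregmanDiv f g (x t) (x (t + 1)) := by
    rw [sub_add_inner_eq_add_mul_bregmanDiv f g c (hZ t)]
    ring
  rw [sum_range_succ', sum_congr rfl fun t _ ↦ succ_term t, initial_term, sum_add_distrib,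
    sum_add_distrib, sum_range_sub]
  ring

end Bregman

/-- **Telescoping of the IAM numerator.** For the IAM iterates with `λ_t = t`
(so `z_{t−1} − x_t = −t (x_{t−1} − x_t)` for `t ≥ 1`, and `z_{−1} = x_0`), writing
`Z t := z_{t−1}`, one has for every `k ≥ 0`:
`∑_{t=0}^{k} [f(x_t) − f(x_*) + ⟪g(x_t), z_{t−1} − x_t⟫]
  = (k+1)(f(x_k) − f(x_*)) + ∑_{t=1}^{k} t · B_f(x_{t−1}, x_t)`,
where `B_f(x,y) = f(x) − f(y) − ⟪g(y), x − y⟫ ≥ 0` by convexity. -/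
theorem iam_numerator_telescoping
    {d : ℕ} (f : EuclideanSpace ℝ (Fin d) → ℝ)
    (g : EuclideanSpace ℝ (Fin d) → EuclideanSpace ℝ (Fin d))
    (hconv : ConvexOn ℝ Set.univ f)
    (hsubgrad : ∀ x y, f x + ⟪g x, y - x⟫ ≤ f y)
    (xstar : EuclideanSpace ℝ (Fin d)) (hmin : IsMinOn f Set.univ xstar)
    (x Z : ℕ → EuclideanSpace ℝ (Fin d))
    (hZ0 : Z 0 = x 0)
    (hZ : ∀ t : ℕ, Z (t + 1) - x (t + 1) = -(((t : ℝ) + 1) • (x t - x (t + 1)))) :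
    (∀ k : ℕ,
      ∑ t ∈ range (k + 1), (f (x t) - f xstar + ⟪g (x t), Z t - x t⟫)
        = ((k : ℝ) + 1) * (f (x k) - f xstar)
          + ∑ t ∈ range k, ((t : ℝ) + 1) *
              (f (x t) - f (x (t + 1)) - ⟪g (x (t + 1)), x t - x (t + 1)⟫)) ∧
      (∀ t : ℕ, 0 ≤ f (x t) - f (x (t + 1)) - ⟪g (x (t + 1)), x t - x (t + 1)⟫) := by
  simpa [bregmanDiv] using iam_numerator_telescoping_general f g hsubgrad (f xstar)
    (fun t ↦ (t : ℝ)) Nat.cast_zero x Z hZ0 (by simpa using hZ)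
end
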